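/- Assume α > 0, Assumption 2 holds, and ℓ is the exponential loss ℓ_exp or the logistic loss ℓ_log. Then along any gradient flow of the empirical risk of a deep linear network, min_{1≤i≤n} y_i (W_L(t)/‖W_L(t)‖_F) ⋯ (W_1(t)/‖W_1(t)‖_F) x_i → γ as t → ∞; that is, the normalized layers asymptotically solve the problem max over matrices A_k with ‖A_k‖_F = 1 of min_i y_i (A_L⋯A_1) x_i, whose value is γ. -/

import Mathlib

/-!
The argument follows the classical picture of implicit bias in deep linear networks: along the flow
the risk vanishes, the layers blow up and align with rank-one factors, and the end-to-end direction
becomes the max-margin one.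

*Balancedness.* `W_{k+1}ᵀ W_{k+1} - W_k W_kᵀ` is conserved (`IsGradientFlow.balanced`), so the
squared Frobenius norms of the layers differ by constants.

*The risk vanishes* (`IsGradientFlow.eventually_margin`). Since `dR/dt = -∑ₖ ‖∂R/∂W_k‖²` and the
initial gradient is nonzero, the risk drops strictly below `ℓ 0`, which keeps `w = w_prod` away
from `0`. If the risk stayed above some `ε > 0`, separability would keep `∇R(w)` away from `0`.
The layer gradient `G₀ = ∂R/∂W_0` has rank at most one and satisfies `‖G₀‖² ‖W_0‖² ≥ ‖w‖² ‖∇R(w)‖²`;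
comparing `R` with `log (1 + ‖W_0‖²)` then shows that `R` would decrease without bound
(`false_of_persistent_decrease`). Hence every margin, and therefore every `‖W_k‖`, tends to infinity.

*Alignment* (`tendsto_nsq_prodUpTo`). By balancedness, every limit point `(A_k)` of the normalized
layers satisfies `A_{k+1}ᵀ A_{k+1} = A_k A_kᵀ` exactly, and the top layer is a row vector of unit
norm, so the product of the `A_k` has norm one.

*Direction.* Let `w_⊥` be the part of `w` orthogonal to the max-margin vector `ū`. The squared norm
of `W_0` restricted to the complement of `ū` has derivative `-2 ⟨∇R(w), w_⊥⟩`, and `α > 0` makes this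
nonpositive as soon as `‖w_⊥‖` is large: some support vector opposing `w_⊥` then outweighs all
data points favouring it (`grad_dot_perp_nonneg`). If that part were a nonnegligible
fraction of `W_0`, alignment would force `w_⊥` to be large, so `tendsto_div_zero_of_barrier` shows
that it is negligible. Hence the normalized `w` tends to `ū`, whose smallest margin is `γ`.
-/

open Matrix Filter
open scoped BigOperators

noncomputable section

/-- Euclidean norm of a vector in `ℝ^m`. -/
def vecNorm {m : Type*} [Fintype m] (v : m → ℝ) : ℝ :=
  Real.sqrt (∑ i, (v i) ^ 2)

/-- Frobenius norm of a real matrix. -/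
def frobNorm {m n : Type*} [Fintype m] [Fintype n] (M : Matrix m n ℝ) : ℝ :=
  Real.sqrt (∑ i, ∑ j, (M i j) ^ 2)

/-- Spectral norm (operator 2-norm) of a real matrix. -/
def specNorm {m n : Type*} [Fintype m] [Fintype n] (M : Matrix m n ℝ) : ℝ :=
  sSup {c : ℝ | ∃ v : n → ℝ, vecNorm v = 1 ∧ c = vecNorm (M.mulVec v)}

/-- `(u, v)` is a top singular vector pair of `M`: both are unit vectors,
`M v = ‖M‖₂ u` and `Mᵀ u = ‖M‖₂ v`. -/
def IsTopSingularPair {m n : Type*} [Fintype m] [Fintype n]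
    (M : Matrix m n ℝ) (u : m → ℝ) (v : n → ℝ) : Prop :=
  vecNorm u = 1 ∧ vecNorm v = 1 ∧
    M.mulVec v = specNorm M • u ∧ Mᵀ.mulVec u = specNorm M • v

/-- Parameters of a deep linear network: layer `k` (0-indexed; paper layer `k+1`)
is a matrix mapping `ℝ^{dim k}` to `ℝ^{dim (k+1)}`. -/
abbrev Layers (dim : ℕ → ℕ) := ∀ j : ℕ, Matrix (Fin (dim (j+1))) (Fin (dim j)) ℝ

/-- Product `W_{j-1} ⋯ W_0` of the bottom `j` layers (paper: `W_j ⋯ W_1`). -/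
def prodUpTo {dim : ℕ → ℕ} (W : Layers dim) : ∀ j : ℕ, Matrix (Fin (dim j)) (Fin (dim 0)) ℝ
  | 0 => 1
  | (j+1) => W j * prodUpTo W j

/-- Product `W_{L-1} ⋯ W_j` of the layers from `j` up to the top layer `L-1`
(paper: `W_L ⋯ W_{j+1}`); for `j ≥ L` it is a pseudo-identity. -/
def prodFrom {dim : ℕ → ℕ} (L : ℕ) (W : Layers dim) (j : ℕ) :
    Matrix (Fin (dim L)) (Fin (dim j)) ℝ :=
  if h : j < L then prodFrom L W (j+1) * W j
  else Matrix.of fun i j' => if (i : ℕ) = (j' : ℕ) then 1 else 0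
  termination_by L - j
  decreasing_by omega

/-- The linear predictor `w_prod = (W_L ⋯ W_1)ᵀ ∈ ℝ^d` induced by the network
(recall `dim L = 1`). -/
def wprod {dim : ℕ → ℕ} (L : ℕ) (W : Layers dim) : Fin (dim 0) → ℝ :=
  fun j => ∑ a, prodUpTo W L a j

/-- Empirical risk of a linear predictor `w`: `R(w) = (1/n) ∑ᵢ ℓ(⟨w, zᵢ⟩)`. -/
def riskV {n d : ℕ} (ℓ : ℝ → ℝ) (z : Fin n → Fin d → ℝ) (w : Fin d → ℝ) : ℝ :=
  (n : ℝ)⁻¹ * ∑ i, ℓ (w ⬝ᵥ z i)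

/-- Gradient of the risk w.r.t. the linear predictor: `∇R(w) = (1/n) ∑ᵢ ℓ'(⟨w, zᵢ⟩) zᵢ`. -/
def gradRiskV {n d : ℕ} (ℓ' : ℝ → ℝ) (z : Fin n → Fin d → ℝ) (w : Fin d → ℝ) :
    Fin d → ℝ :=
  (n : ℝ)⁻¹ • ∑ i, ℓ' (w ⬝ᵥ z i) • z i

/-- The partial gradient of the empirical risk with respect to layer `k`:
`∂R/∂W_k = (W_L ⋯ W_{k+1})ᵀ ∇R(w_prod)ᵀ (W_{k-1} ⋯ W_1)ᵀ`. -/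
def gradLayer {dim : ℕ → ℕ} (L : ℕ) (ℓ' : ℝ → ℝ) {n : ℕ}
    (z : Fin n → Fin (dim 0) → ℝ) (W : Layers dim) (k : ℕ) :
    Matrix (Fin (dim (k+1))) (Fin (dim k)) ℝ :=
  (prodFrom L W (k+1))ᵀ *
    (Matrix.of fun (_ : Fin (dim L)) (j : Fin (dim 0)) => gradRiskV ℓ' z (wprod L W) j) *
    (prodUpTo W k)ᵀ

/-- Empirical risk of the network. -/
def riskW {dim : ℕ → ℕ} (L : ℕ) (ℓ : ℝ → ℝ) {n : ℕ}
    (z : Fin n → Fin (dim 0) → ℝ) (W : Layers dim) : ℝ :=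
  riskV ℓ z (wprod L W)

/-- Gradient flow: `dW(t)/dt = −∇R(W(t))` for all `t ≥ 0`, entrywise on each layer. -/
def IsGradientFlow {dim : ℕ → ℕ} (L : ℕ) (ℓ' : ℝ → ℝ) {n : ℕ}
    (z : Fin n → Fin (dim 0) → ℝ) (W : ℝ → Layers dim) : Prop :=
  ∀ t : ℝ, 0 ≤ t → ∀ k < L, ∀ i j,
    HasDerivAt (fun s => W s k i j) (-(gradLayer L ℓ' z (W t) k i j)) t

/-- The initialization-dependent constant `D`. -/
def Dconst {dim : ℕ → ℕ} (L : ℕ) (W0 : Layers dim) : ℝ :=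
  (⨆ k : Fin L, frobNorm (W0 k) ^ 2) - frobNorm (W0 (L-1)) ^ 2
    + ∑ k ∈ Finset.range (L-1),
        specNorm (W0 k * (W0 k)ᵀ - (W0 (k+1))ᵀ * W0 (k+1))

/-- Euclidean norm of a parameter tuple (all entries of the first `L` layers concatenated). -/
def paramNorm {dim : ℕ → ℕ} (L : ℕ) (V : Layers dim) : ℝ :=
  Real.sqrt (∑ k ∈ Finset.range L, frobNorm (V k) ^ 2)

/-- Squared Euclidean norm of the full gradient `∇R(W)`. -/
def gradNormSq {dim : ℕ → ℕ} (L : ℕ) (ℓ' : ℝ → ℝ) {n : ℕ}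
    (z : Fin n → Fin (dim 0) → ℝ) (W : Layers dim) : ℝ :=
  ∑ k ∈ Finset.range L, frobNorm (gradLayer L ℓ' z W k) ^ 2

/-- The data-dependent constant `α = min_{‖ξ‖=1, ξ ⟂ ū} max_{i ∈ S} ⟨ξ, zᵢ⟩`,
where `S` is the set of support vectors. -/
def alphaConst {n d : ℕ} (z : Fin n → Fin d → ℝ) (ubar : Fin d → ℝ) (γ : ℝ) : ℝ :=
  sInf {c : ℝ | ∃ ξ : Fin d → ℝ, vecNorm ξ = 1 ∧ ξ ⬝ᵥ ubar = 0 ∧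
    c = sSup {r : ℝ | ∃ i : Fin n, ubar ⬝ᵥ z i = γ ∧ r = ξ ⬝ᵥ z i}}

/-- Orthogonal projection onto the orthogonal complement of `span(ū)` (for `ū` a unit vector). -/
def projPerp {d : ℕ} (ubar : Fin d → ℝ) (w : Fin d → ℝ) : Fin d → ℝ :=
  w - (w ⬝ᵥ ubar) • ubar

/-! ### Frobenius norms and inner products -/

/-- Squared Frobenius norm of a real matrix. -/
def nsq {m n : Type*} [Fintype m] [Fintype n] (M : Matrix m n ℝ) : ℝ :=
  ∑ i, ∑ j, (M i j) ^ 2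

lemma nsq_nonneg {m n : Type*} [Fintype m] [Fintype n] (M : Matrix m n ℝ) : 0 ≤ nsq M :=
  Finset.sum_nonneg fun _ _ => Finset.sum_nonneg fun _ _ => sq_nonneg _

lemma frobNorm_nonneg {m n : Type*} [Fintype m] [Fintype n] (M : Matrix m n ℝ) :
    0 ≤ frobNorm M := Real.sqrt_nonneg _

lemma frobNorm_sq {m n : Type*} [Fintype m] [Fintype n] (M : Matrix m n ℝ) :
    frobNorm M ^ 2 = nsq M := Real.sq_sqrt (nsq_nonneg M)

lemma nsq_eq_trace {m n : Type*} [Fintype m] [Fintype n] (M : Matrix m n ℝ) :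
    nsq M = trace (Mᵀ * M) := by
  simp only [nsq, trace, diag, mul_apply, transpose_apply]
  rw [Finset.sum_comm]
  simp only [sq]

lemma nsq_eq_trace' {m n : Type*} [Fintype m] [Fintype n] (M : Matrix m n ℝ) :
    nsq M = trace (M * Mᵀ) := by
  rw [nsq_eq_trace, trace_mul_comm]

lemma nsq_smul {m n : Type*} [Fintype m] [Fintype n] (c : ℝ) (M : Matrix m n ℝ) :
    nsq (c • M) = c ^ 2 * nsq M := by
  simp only [nsq, Matrix.smul_apply, smul_eq_mul, mul_pow, Finset.mul_sum]

lemma dot_sq_le {m : Type*} [Fintype m] (u v : m → ℝ) :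
    (u ⬝ᵥ v) ^ 2 ≤ (u ⬝ᵥ u) * (v ⬝ᵥ v) := by
  have := Finset.sum_mul_sq_le_sq_mul_sq Finset.univ u v
  simpa only [dotProduct, sq] using this

lemma dot_self_nonneg {m : Type*} [Fintype m] (u : m → ℝ) : 0 ≤ u ⬝ᵥ u :=
  Finset.sum_nonneg fun _ _ => mul_self_nonneg _

lemma vecNorm_sq {m : Type*} [Fintype m] (v : m → ℝ) : vecNorm v ^ 2 = v ⬝ᵥ v := by
  unfold vecNorm
  rw [Real.sq_sqrt (Finset.sum_nonneg fun _ _ => sq_nonneg _)]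
  simp only [dotProduct, sq]

/-- The Frobenius norm is submultiplicative. -/
lemma nsq_mul_le {m n p : Type*} [Fintype m] [Fintype n] [Fintype p]
    (A : Matrix m n ℝ) (B : Matrix n p ℝ) : nsq (A * B) ≤ nsq A * nsq B := by
  have h : nsq A * nsq B = ∑ i, ∑ k, (∑ j, A i j ^ 2) * (∑ j, B j k ^ 2) := by
    unfold nsq
    rw [Finset.sum_comm (f := fun i j => B i j ^ 2), Finset.sum_mul_sum]
  rw [h]
  refine Finset.sum_le_sum fun i _ => Finset.sum_le_sum fun k _ => ?_
  rw [mul_apply]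
  exact Finset.sum_mul_sq_le_sq_mul_sq Finset.univ (fun j => A i j) (fun j => B j k)

lemma mulVec_dot_self_le {m n : Type*} [Fintype m] [Fintype n] (A : Matrix m n ℝ) (v : n → ℝ) :
    A.mulVec v ⬝ᵥ A.mulVec v ≤ nsq A * (v ⬝ᵥ v) := by
  unfold nsq
  rw [Finset.sum_mul]
  refine Finset.sum_le_sum fun i _ => ?_
  have := dot_sq_le (A i) v
  simp only [mulVec, ← sq]
  refine this.trans (le_of_eq ?_)
  simp only [dotProduct, sq]

/-! ### Entrywise differentiation of matrix-valued curves -/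

/-- `M` has derivative `M'` at `t`, entry by entry; this needs no choice of a matrix norm. -/
def HasMDeriv {m n : Type*} (M : ℝ → Matrix m n ℝ) (M' : Matrix m n ℝ) (t : ℝ) : Prop :=
  ∀ i j, HasDerivAt (fun s => M s i j) (M' i j) t

lemma HasMDeriv.mul {m n p : Type*} [Fintype n] {A : ℝ → Matrix m n ℝ} {B : ℝ → Matrix n p ℝ}
    {A' : Matrix m n ℝ} {B' : Matrix n p ℝ} {t : ℝ} (hA : HasMDeriv A A' t)
    (hB : HasMDeriv B B' t) : HasMDeriv (fun s => A s * B s) (A' * B t + A t * B') t := by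
  intro i j
  simp only [mul_apply, Matrix.add_apply]
  rw [← Finset.sum_add_distrib]
  exact HasDerivAt.fun_sum fun k _ => (hA i k).mul (hB k j)

lemma HasMDeriv.const {m n : Type*} (A : Matrix m n ℝ) (t : ℝ) :
    HasMDeriv (fun _ => A) 0 t := fun _ _ => hasDerivAt_const _ _

lemma HasMDeriv.transpose {m n : Type*} {A : ℝ → Matrix m n ℝ} {A' : Matrix m n ℝ} {t : ℝ}
    (hA : HasMDeriv A A' t) : HasMDeriv (fun s => (A s)ᵀ) A'ᵀ t := fun i j => hA j i

lemma HasMDeriv.trace {m : Type*} [Fintype m] {A : ℝ → Matrix m m ℝ} {A' : Matrix m m ℝ} {t : ℝ}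
    (hA : HasMDeriv A A' t) : HasDerivAt (fun s => Matrix.trace (A s)) (Matrix.trace A') t := by
  simp only [Matrix.trace, diag]
  exact HasDerivAt.fun_sum fun k _ => hA k k

lemma HasMDeriv.nsq {m n : Type*} [Fintype m] [Fintype n] {A : ℝ → Matrix m n ℝ}
    {A' : Matrix m n ℝ} {t : ℝ} (hA : HasMDeriv A A' t) :
    HasDerivAt (fun s => nsq (A s)) (2 * Matrix.trace (A'ᵀ * A t)) t := by
  simp only [nsq_eq_trace]
  convert (hA.transpose.mul hA).trace using 1
  rw [trace_add, two_mul]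
  congr 1
  rw [← trace_transpose, transpose_mul, transpose_transpose]

/-! ### Partial products of the layers -/

lemma prodFrom_lt {dim : ℕ → ℕ} {L : ℕ} (W : Layers dim) {j : ℕ} (h : j < L) :
    prodFrom L W j = prodFrom L W (j+1) * W j := by
  rw [prodFrom, dif_pos h]

lemma prodFrom_self {dim : ℕ → ℕ} (L : ℕ) (W : Layers dim) : prodFrom L W L = 1 := by
  rw [prodFrom, dif_neg (lt_irrefl L)]
  ext i j
  simp [one_apply, Fin.ext_iff]

lemma prodFrom_mul_prodUpTo {dim : ℕ → ℕ} {L : ℕ} (W : Layers dim) {j : ℕ} (h : j ≤ L) :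
    prodFrom L W j * prodUpTo W j = prodUpTo W L := by
  have key : ∀ j ≤ L, prodFrom L W j * prodUpTo W j = prodFrom L W 0 * prodUpTo W 0 := by
    intro j
    induction j with
    | zero => intro _; rfl
    | succ j ih =>
      intro hj
      rw [← ih (by omega), prodFrom_lt W (show j < L by omega), prodUpTo, Matrix.mul_assoc]
  rw [key j h, ← key L le_rfl, prodFrom_self, Matrix.one_mul]

lemma nsq_prodFrom_le_prod {dim : ℕ → ℕ} {L : ℕ} (hdimL : dim L = 1) (A : Layers dim)
    {j : ℕ} (hj : j ≤ L) : nsq (prodFrom L A j) ≤ ∏ k ∈ Finset.Ico j L, nsq (A k) := by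
  induction hj using Nat.decreasingInduction with
  | self =>
    rw [prodFrom_self, nsq_eq_trace]
    simp [hdimL]
  | of_succ k hk ih =>
    rw [prodFrom_lt A hk, Finset.prod_eq_prod_Ico_succ_bot hk, mul_comm]
    exact (nsq_mul_le _ _).trans (mul_le_mul_of_nonneg_right ih (nsq_nonneg _))

lemma nsq_prodUpTo_le_prod {dim : ℕ → ℕ} {L : ℕ} (hdimL : dim L = 1) (A : Layers dim) :
    nsq (prodUpTo A L) ≤ ∏ k ∈ Finset.range L, nsq (A k) := by
  have := nsq_prodFrom_le_prod hdimL A (Nat.zero_le L)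
  rwa [← prodFrom_mul_prodUpTo A (Nat.zero_le L), prodUpTo, Matrix.mul_one, Finset.range_eq_Ico]

lemma prodUpTo_mulVec_sum {dim : ℕ → ℕ} (L : ℕ) (W : Layers dim) (v : Fin (dim 0) → ℝ) :
    ∑ a, (prodUpTo W L).mulVec v a = wprod L W ⬝ᵥ v := by
  simp only [wprod, mulVec, dotProduct, Finset.sum_mul]
  rw [Finset.sum_comm]

lemma wprod_dot_self {dim : ℕ → ℕ} {L : ℕ} (hdimL : dim L = 1) (W : Layers dim) :
    wprod L W ⬝ᵥ wprod L W = nsq (prodUpTo W L) := by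
  have : Unique (Fin (dim L)) := (finCongr hdimL).unique
  simp [wprod, nsq, dotProduct, sq]

/-- If no layer has Frobenius norm above `1`, the output along `v` is bounded by the response of
the bottom layer to `v`. -/
lemma wprod_dot_sq_le {dim : ℕ → ℕ} {L : ℕ} (hL : 0 < L) (hdimL : dim L = 1) (A : Layers dim)
    (hA : ∀ k, nsq (A k) ≤ 1) (v : Fin (dim 0) → ℝ) :
    (wprod L A ⬝ᵥ v) ^ 2 ≤ (A 0).mulVec v ⬝ᵥ (A 0).mulVec v := by
  have : Unique (Fin (dim L)) := (finCongr hdimL).unique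
  have e : (wprod L A ⬝ᵥ v) ^ 2 = (prodFrom L A 1).mulVec ((A 0).mulVec v)
      ⬝ᵥ (prodFrom L A 1).mulVec ((A 0).mulVec v) := by
    have e2 : prodFrom L A 1 * A 0 = prodUpTo A L := by
      rw [← prodFrom_mul_prodUpTo A (show 1 ≤ L from hL), prodUpTo, prodUpTo, Matrix.mul_one]
    rw [mulVec_mulVec, e2, ← prodUpTo_mulVec_sum, dotProduct]
    simp [sq]
  rw [e]
  refine (mulVec_dot_self_le _ _).trans (mul_le_of_le_one_left (dot_self_nonneg _) ?_)
  exact (nsq_prodFrom_le_prod hdimL A (show 1 ≤ L from hL)).trans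
    (Finset.prod_le_one (fun _ _ => nsq_nonneg _) fun k _ => hA k)

lemma prodUpTo_smul {dim : ℕ → ℕ} (W : Layers dim) (c : ℕ → ℝ) (j : ℕ) :
    prodUpTo (fun k => c k • W k : Layers dim) j
      = (∏ k ∈ Finset.range j, c k) • prodUpTo W j := by
  induction j with
  | zero => simp [prodUpTo]
  | succ j ih =>
    rw [prodUpTo, prodUpTo, ih, Finset.prod_range_succ, Matrix.smul_mul, Matrix.mul_smul, smul_smul,
      mul_comm (c j)]

lemma wprod_smul {dim : ℕ → ℕ} (L : ℕ) (W : Layers dim) (c : ℕ → ℝ) :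
    wprod L (fun k => c k • W k : Layers dim)
      = (∏ k ∈ Finset.range L, c k) • wprod L W := by
  ext j
  simp [wprod, prodUpTo_smul, Finset.mul_sum]

/-- Leibniz rule for the product of the layers: differentiating one factor at a time. -/
lemma hasMDeriv_prodUpTo {dim : ℕ → ℕ} {L : ℕ} {W : ℝ → Layers dim} {W' : Layers dim} {t : ℝ}
    (h : ∀ k < L, HasMDeriv (fun s => W s k) (W' k) t) (j : ℕ) (hj : j ≤ L) :
    ∃ P' : Matrix (Fin (dim j)) (Fin (dim 0)) ℝ, HasMDeriv (fun s => prodUpTo (W s) j) P' t ∧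
      prodFrom L (W t) j * P'
        = ∑ k ∈ Finset.range j, prodFrom L (W t) (k+1) * W' k * prodUpTo (W t) k := by
  induction j with
  | zero => exact ⟨0, HasMDeriv.const 1 t, by simp⟩
  | succ j ih =>
    obtain ⟨P', hP', e⟩ := ih (by omega)
    refine ⟨_, (h j (by omega)).mul hP', ?_⟩
    rw [Finset.sum_range_succ, ← e, prodFrom_lt (W t) (show j < L by omega), Matrix.mul_add,
      Matrix.mul_assoc, Matrix.mul_assoc, add_comm]

/-! ### Evolution of the layers along the gradient flow -/

/-- The gradient `g` of the risk at the linear predictor, repeated on every row; for a network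
with one output it is the row vector `gᵀ`. -/
def gradMat {dim : ℕ → ℕ} (L : ℕ) (ℓ' : ℝ → ℝ) {n : ℕ}
    (z : Fin n → Fin (dim 0) → ℝ) (W : Layers dim) : Matrix (Fin (dim L)) (Fin (dim 0)) ℝ :=
  Matrix.of fun _ j => gradRiskV ℓ' z (wprod L W) j

lemma gradLayer_eq {dim : ℕ → ℕ} (L : ℕ) (ℓ' : ℝ → ℝ) {n : ℕ}
    (z : Fin n → Fin (dim 0) → ℝ) (W : Layers dim) (k : ℕ) :
    gradLayer L ℓ' z W k
      = (prodFrom L W (k+1))ᵀ * gradMat L ℓ' z W * (prodUpTo W k)ᵀ := rfl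

lemma trace_gradMat_mul {dim : ℕ → ℕ} (L : ℕ) (ℓ' : ℝ → ℝ) {n : ℕ}
    (z : Fin n → Fin (dim 0) → ℝ) (W : Layers dim) (X : Matrix (Fin (dim L)) (Fin (dim 0)) ℝ) :
    trace ((gradMat L ℓ' z W)ᵀ * X)
      = gradRiskV ℓ' z (wprod L W) ⬝ᵥ fun j => ∑ a, X a j := by
  simp [trace, mul_apply, gradMat, dotProduct, Finset.mul_sum]

/-- Pairing a layer gradient with a direction `X` is the first-order change of the output. -/
lemma trace_gradLayer_mul {dim : ℕ → ℕ} (L : ℕ) (ℓ' : ℝ → ℝ) {n : ℕ}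
    (z : Fin n → Fin (dim 0) → ℝ) (W : Layers dim) (k : ℕ)
    (X : Matrix (Fin (dim (k+1))) (Fin (dim k)) ℝ) :
    trace ((gradLayer L ℓ' z W k)ᵀ * X)
      = trace ((gradMat L ℓ' z W)ᵀ * (prodFrom L W (k+1) * X * prodUpTo W k)) := by
  rw [gradLayer_eq]
  simp only [transpose_mul, transpose_transpose, Matrix.mul_assoc]
  rw [trace_mul_comm]
  simp only [Matrix.mul_assoc]

lemma IsGradientFlow.hasMDeriv {dim : ℕ → ℕ} {L n : ℕ} {ℓ' : ℝ → ℝ}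
    {z : Fin n → Fin (dim 0) → ℝ} {W : ℝ → Layers dim} (hW : IsGradientFlow L ℓ' z W)
    {t : ℝ} (ht : 0 ≤ t) : ∀ k < L,
      HasMDeriv (fun s => W s k) ((fun k => -gradLayer L ℓ' z (W t) k : Layers dim) k) t :=
  fun k hk i j => hW t ht k hk i j

lemma IsGradientFlow.hasDerivAt_risk {dim : ℕ → ℕ} {L n : ℕ} {ℓ ℓ' : ℝ → ℝ}
    (hℓ : ∀ x, HasDerivAt ℓ (ℓ' x) x)
    {z : Fin n → Fin (dim 0) → ℝ} {W : ℝ → Layers dim} (hW : IsGradientFlow L ℓ' z W)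
    {t : ℝ} (ht : 0 ≤ t) :
    HasDerivAt (fun s => riskW L ℓ z (W s)) (-gradNormSq L ℓ' z (W t)) t := by
  obtain ⟨P', hP', e⟩ := hasMDeriv_prodUpTo (hW.hasMDeriv ht) L le_rfl
  rw [prodFrom_self, Matrix.one_mul] at e
  have hw : ∀ j, HasDerivAt (fun s => wprod L (W s) j) (∑ a, P' a j) t := fun j =>
    HasDerivAt.fun_sum fun a _ => hP' a j
  have hd : ∀ i, HasDerivAt (fun s => wprod L (W s) ⬝ᵥ z i) ((fun j => ∑ a, P' a j) ⬝ᵥ z i) t :=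
    fun i => HasDerivAt.fun_sum fun j _ => (hw j).mul_const _
  have hR : HasDerivAt (fun s => riskW L ℓ z (W s))
      ((n : ℝ)⁻¹ * ∑ i, ℓ' (wprod L (W t) ⬝ᵥ z i) * ((fun j => ∑ a, P' a j) ⬝ᵥ z i)) t :=
    (HasDerivAt.fun_sum fun i _ => (hℓ _).comp t (hd i)).const_mul _
  convert hR using 1
  have h1 : (n : ℝ)⁻¹ * ∑ i, ℓ' (wprod L (W t) ⬝ᵥ z i) * ((fun j => ∑ a, P' a j) ⬝ᵥ z i)
      = gradRiskV ℓ' z (wprod L (W t)) ⬝ᵥ fun j => ∑ a, P' a j := by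
    rw [gradRiskV, smul_dotProduct, sum_dotProduct, smul_eq_mul]
    congr 1
    refine Finset.sum_congr rfl fun i _ => ?_
    rw [smul_dotProduct, smul_eq_mul, dotProduct_comm (z i)]
  rw [h1, ← trace_gradMat_mul, e, Matrix.mul_sum, trace_sum, gradNormSq, ← Finset.sum_neg_distrib]
  refine Finset.sum_congr rfl fun k _ => ?_
  rw [← trace_gradLayer_mul, Matrix.mul_neg, trace_neg, frobNorm_sq, nsq_eq_trace]

lemma trace_gradLayer_mul_self {dim : ℕ → ℕ} (L : ℕ) (ℓ' : ℝ → ℝ) {n : ℕ}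
    (z : Fin n → Fin (dim 0) → ℝ) (W : Layers dim) (k : ℕ) (hk : k < L) :
    trace ((gradLayer L ℓ' z W k)ᵀ * W k) = gradRiskV ℓ' z (wprod L W) ⬝ᵥ wprod L W := by
  rw [trace_gradLayer_mul, ← prodFrom_lt W hk, prodFrom_mul_prodUpTo W hk.le, trace_gradMat_mul]
  rfl

/-- All layers have the same growth rate, `d‖W_k‖²/dt = -2⟨∇R(w), w⟩`. -/
lemma IsGradientFlow.hasDerivAt_nsq {dim : ℕ → ℕ} {L n : ℕ} {ℓ' : ℝ → ℝ}
    {z : Fin n → Fin (dim 0) → ℝ} {W : ℝ → Layers dim} (hW : IsGradientFlow L ℓ' z W)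
    {t : ℝ} (ht : 0 ≤ t) (k : ℕ) (hk : k < L) :
    HasDerivAt (fun s => nsq (W s k))
      (-2 * (gradRiskV ℓ' z (wprod L (W t)) ⬝ᵥ wprod L (W t))) t := by
  convert (hW.hasMDeriv ht k hk).nsq using 1
  rw [transpose_neg, Matrix.neg_mul, trace_neg, trace_gradLayer_mul_self L ℓ' z (W t) k hk]
  ring

/-- The part of the bottom layer acting along `u` grows at rate `-2⟨∇R(w), u⟩⟨w, u⟩`. -/
lemma IsGradientFlow.hasDerivAt_mulVec {dim : ℕ → ℕ} {L n : ℕ} {ℓ' : ℝ → ℝ}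
    {z : Fin n → Fin (dim 0) → ℝ} {W : ℝ → Layers dim} (hW : IsGradientFlow L ℓ' z W)
    {t : ℝ} (ht : 0 ≤ t) (hL : 0 < L) (u : Fin (dim 0) → ℝ) :
    HasDerivAt (fun s => (W s 0).mulVec u ⬝ᵥ (W s 0).mulVec u)
      (-2 * ((gradRiskV ℓ' z (wprod L (W t)) ⬝ᵥ u) * (wprod L (W t) ⬝ᵥ u))) t := by
  have h0 := hW.hasMDeriv ht 0 hL
  have h1 : ∀ i, HasDerivAt (fun s => (W s 0).mulVec u i)
      ((-gradLayer L ℓ' z (W t) 0).mulVec u i) t := fun i =>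
    HasDerivAt.fun_sum (u := Finset.univ) (A := fun j s => W s 0 i j * u j)
      (A' := fun j => (-gradLayer L ℓ' z (W t) 0) i j * u j) fun j _ => (h0 i j).mul_const (u j)
  have h2 : HasDerivAt (fun s => (W s 0).mulVec u ⬝ᵥ (W s 0).mulVec u)
      (∑ i, ((-gradLayer L ℓ' z (W t) 0).mulVec u i * (W t 0).mulVec u i
        + (W t 0).mulVec u i * (-gradLayer L ℓ' z (W t) 0).mulVec u i)) t :=
    HasDerivAt.fun_sum fun i _ => (h1 i).mul (h1 i)
  convert h2 using 1
  have h3 : (W t 0).mulVec u ⬝ᵥ (gradLayer L ℓ' z (W t) 0).mulVec u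
      = (gradRiskV ℓ' z (wprod L (W t)) ⬝ᵥ u) * (wprod L (W t) ⬝ᵥ u) := by
    have e : gradLayer L ℓ' z (W t) 0 = (prodFrom L (W t) 1)ᵀ * gradMat L ℓ' z (W t) := by
      rw [gradLayer_eq, prodUpTo, transpose_one, Matrix.mul_one]
    have e2 : prodFrom L (W t) 1 * W t 0 = prodUpTo (W t) L := by
      rw [← prodFrom_mul_prodUpTo (W t) (show 1 ≤ L from hL), prodUpTo, prodUpTo, Matrix.mul_one]
    rw [e, ← mulVec_mulVec, dotProduct_mulVec, vecMul_transpose, mulVec_mulVec, e2,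
      ← prodUpTo_mulVec_sum, dotProduct, Finset.mul_sum]
    refine Finset.sum_congr rfl fun a _ => ?_
    rw [mul_comm]
    rfl
  rw [← h3]
  simp only [neg_mulVec, dotProduct, Finset.mul_sum, Pi.neg_apply]
  refine Finset.sum_congr rfl fun i _ => by ring

/-- Balancedness: `W_{k+1}ᵀ W_{k+1} - W_k W_kᵀ` is conserved. -/
lemma IsGradientFlow.balanced {dim : ℕ → ℕ} {L n : ℕ} {ℓ' : ℝ → ℝ}
    {z : Fin n → Fin (dim 0) → ℝ} {W : ℝ → Layers dim} (hW : IsGradientFlow L ℓ' z W)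
    (k : ℕ) (hk : k + 1 < L) : ∃ C : Matrix (Fin (dim (k+1))) (Fin (dim (k+1))) ℝ,
      ∀ t, 0 ≤ t → (W t (k+1))ᵀ * W t (k+1) = W t k * (W t k)ᵀ + C := by
  refine ⟨(W 0 (k+1))ᵀ * W 0 (k+1) - W 0 k * (W 0 k)ᵀ, fun t ht => ?_⟩
  have hd : ∀ s, 0 ≤ s → ∀ i j, HasDerivAt (fun s => ((W s (k+1))ᵀ * W s (k+1)) i j
      - (W s k * (W s k)ᵀ) i j) 0 s := by
    intro s hs i j
    have h1 := hW.hasMDeriv hs (k+1) hk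
    have h0 := hW.hasMDeriv hs k (by omega)
    refine (((h1.transpose.mul h1) i j).fun_sub ((h0.mul h0.transpose) i j)).congr_deriv ?_
    have e : (W s (k+1))ᵀ * gradLayer L ℓ' z (W s) (k+1)
        = gradLayer L ℓ' z (W s) k * (W s k)ᵀ := by
      rw [gradLayer_eq, gradLayer_eq, prodFrom_lt (W s) hk, prodUpTo]
      simp only [transpose_mul, Matrix.mul_assoc]
    have e' : (gradLayer L ℓ' z (W s) (k+1))ᵀ * W s (k+1)
        = W s k * (gradLayer L ℓ' z (W s) k)ᵀ := by
      simpa only [transpose_mul, transpose_transpose] using congrArg Matrix.transpose e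
    simp only [transpose_neg, Matrix.neg_mul, Matrix.mul_neg, e, e']
    rw [← Matrix.sub_apply]
    simp [add_comm]
  ext i j
  have := constant_of_has_deriv_right_zero (a := 0) (b := t)
    (f := fun s => ((W s (k+1))ᵀ * W s (k+1)) i j - (W s k * (W s k)ᵀ) i j)
    (fun s hs => (hd s hs.1 i j).continuousAt.continuousWithinAt)
    (fun s hs => (hd s hs.1 i j).hasDerivWithinAt) t ⟨ht, le_rfl⟩
  simp only [Matrix.add_apply, Matrix.sub_apply]
  linarith

/-- The bottom gradient is the outer product of `∇R(w)` with the product of the upper layers, and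
`w` is the bottom layer applied to that product. -/
lemma dot_mul_dot_le_nsq {dim : ℕ → ℕ} {L : ℕ} (hL : 0 < L) (hdimL : dim L = 1) (ℓ' : ℝ → ℝ)
    {n : ℕ} (z : Fin n → Fin (dim 0) → ℝ) (W : Layers dim) :
    (wprod L W ⬝ᵥ wprod L W)
      * (gradRiskV ℓ' z (wprod L W) ⬝ᵥ gradRiskV ℓ' z (wprod L W))
      ≤ nsq (gradLayer L ℓ' z W 0) * nsq (W 0) := by
  have h1 : wprod L W ⬝ᵥ wprod L W ≤ nsq (prodFrom L W 1) * nsq (W 0) := by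
    rw [wprod_dot_self hdimL, ← prodFrom_mul_prodUpTo W (show 1 ≤ L from hL), prodUpTo, prodUpTo,
      Matrix.mul_one]
    exact nsq_mul_le _ _
  have h2 : nsq (gradLayer L ℓ' z W 0) = nsq (prodFrom L W 1)
      * (gradRiskV ℓ' z (wprod L W) ⬝ᵥ gradRiskV ℓ' z (wprod L W)) := by
    have : Unique (Fin (dim L)) := (finCongr hdimL).unique
    rw [gradLayer_eq, prodUpTo, transpose_one, Matrix.mul_one]
    simp only [nsq, mul_apply, transpose_apply, gradMat, Finset.univ_unique, Finset.sum_singleton,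
      of_apply, mul_pow, dotProduct, ← sq]
    rw [Finset.sum_mul_sum]
  rw [h2]
  calc _ ≤ nsq (prodFrom L W 1) * nsq (W 0)
        * (gradRiskV ℓ' z (wprod L W) ⬝ᵥ gradRiskV ℓ' z (wprod L W)) :=
        mul_le_mul_of_nonneg_right h1 (dot_self_nonneg _)
    _ = _ := by ring

/-! ### Two differential inequalities -/

lemma le_of_hasDerivAt_nonpos {f f' : ℝ → ℝ} {T : ℝ} (h : ∀ t, T ≤ t → HasDerivAt f (f' t) t)
    (h' : ∀ t, T ≤ t → f' t ≤ 0) {s t : ℝ} (hs : T ≤ s) (hst : s ≤ t) : f t ≤ f s := by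
  have : AntitoneOn f (Set.Ici T) := by
    refine antitoneOn_of_deriv_nonpos (convex_Ici T)
      (fun x hx => (h x hx).continuousAt.continuousWithinAt)
      (fun x hx => (h x (interior_subset hx)).differentiableAt.differentiableWithinAt)
      (fun x hx => ?_)
    rw [(h x (interior_subset hx)).deriv]
    exact h' x (interior_subset hx)
  exact this hs (hs.trans hst) hst

/-- A nonnegative `R` cannot decrease at rate `s` forever when `s N ≥ δ` for a quantity `N`
growing no faster than `K s N`: the function `log (1 + N) + K R` is then nonincreasing, which
bounds `N`, hence bounds the rate `s` from below. -/
lemma false_of_persistent_decrease {R N R' N' s : ℝ → ℝ} {T K δ : ℝ}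
    (hR : ∀ t, T ≤ t → HasDerivAt R (R' t) t) (hN : ∀ t, T ≤ t → HasDerivAt N (N' t) t)
    (hR0 : ∀ t, T ≤ t → 0 ≤ R t) (hN0 : ∀ t, T ≤ t → 0 ≤ N t) (hs : ∀ t, T ≤ t → 0 ≤ s t)
    (h1 : ∀ t, T ≤ t → R' t ≤ -s t) (h2 : ∀ t, T ≤ t → N' t ≤ K * (s t * N t))
    (h3 : ∀ t, T ≤ t → δ ≤ s t * N t) (hK : 0 ≤ K) (hδ : 0 < δ) : False := by
  set B := Real.exp (Real.log (1 + N T) + K * R T) with hB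
  have hBpos : 0 < B := Real.exp_pos _
  have hNB : ∀ t, T ≤ t → N t ≤ B := by
    intro t ht
    have hΦ : Real.log (1 + N t) + K * R t ≤ Real.log (1 + N T) + K * R T := by
      refine le_of_hasDerivAt_nonpos (f := fun t => Real.log (1 + N t) + K * R t)
        (f' := fun t => N' t / (1 + N t) + K * R' t) (fun x hx => ?_) (fun x hx => ?_) le_rfl ht
      · have := hN0 x hx
        exact (((hN x hx).const_add 1).log (by positivity)).add ((hR x hx).const_mul K)
      · have hn := hN0 x hx
        have a1 : N' x / (1 + N x) ≤ K * s x := by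
          rw [div_le_iff₀ (by positivity)]
          nlinarith [h2 x hx, mul_nonneg hK (hs x hx)]
        nlinarith [h1 x hx, mul_le_mul_of_nonneg_left (h1 x hx) hK]
    have hn := hN0 t ht
    have h4 : Real.log (1 + N t) ≤ Real.log (1 + N T) + K * R T :=
      le_trans (le_add_of_nonneg_right (mul_nonneg hK (hR0 t ht))) hΦ
    have := Real.exp_le_exp.2 h4
    rw [Real.exp_log (by positivity)] at this
    linarith
  have hsB : ∀ t, T ≤ t → δ / B ≤ s t := by
    intro t ht
    rw [div_le_iff₀ hBpos]
    exact (h3 t ht).trans (mul_le_mul_of_nonneg_left (hNB t ht) (hs t ht))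
  have hc : 0 < δ / B := div_pos hδ hBpos
  have hRT := hR0 T le_rfl
  have ht : T ≤ T + (R T + 1) / (δ / B) := le_add_of_nonneg_right (by positivity)
  have := le_of_hasDerivAt_nonpos (f := fun t => R t + δ / B * t)
    (f' := fun t => R' t + δ / B * 1)
    (fun x hx => (hR x hx).add ((hasDerivAt_id x).const_mul _))
    (fun x hx => by have := h1 x hx; have := hsB x hx; linarith) le_rfl ht
  simp only [mul_add, mul_div_cancel₀ _ hc.ne'] at this
  have := hR0 _ ht
  linarith

/-- If `P` stops growing whenever it exceeds a fixed fraction of a nondecreasing `N → ∞`, and the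
fraction can be taken arbitrarily small, then `P = o(N)`. -/
lemma tendsto_div_zero_of_barrier {P N P' N' : ℝ → ℝ} {T : ℝ}
    (hP : ∀ t, T ≤ t → HasDerivAt P (P' t) t) (hN : ∀ t, T ≤ t → HasDerivAt N (N' t) t)
    (hP0 : ∀ t, 0 ≤ P t) (hN' : ∀ t, T ≤ t → 0 ≤ N' t)
    (hNtop : Tendsto N atTop atTop)
    (h : ∀ ε > 0, ∀ᶠ t in atTop, ε * N t < P t → P' t ≤ 0) :
    Tendsto (fun t => P t / N t) atTop (nhds 0) := by
  rw [Metric.tendsto_nhds]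
  intro ε hε
  obtain ⟨T1, hT1⟩ := eventually_atTop.1
    ((h (ε / 2) (half_pos hε)).and (eventually_ge_atTop T))
  set M := max (P T1 - ε / 2 * N T1) 0 + 1 with hM
  have hM1 : P T1 - ε / 2 * N T1 ≤ M := by
    have := le_max_left (P T1 - ε / 2 * N T1) 0
    linarith
  have hM0 : 0 < M := by
    have := le_max_right (P T1 - ε / 2 * N T1) 0
    linarith
  have key : ∀ t, T1 ≤ t → P t - ε / 2 * N t ≤ M + 1 := by
    intro t ht
    -- a barrier of small positive slope, rising by at most one up to time `t`, makes the comparison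
    -- of derivatives strict
    have hc : 0 < t - T1 + 1 := by linarith
    have := image_le_of_deriv_right_lt_deriv_boundary (a := T1) (b := t)
      (f := fun x => P x - ε / 2 * N x) (f' := fun x => P' x - ε / 2 * N' x)
      (B := fun x => M + (t - T1 + 1)⁻¹ * (x - T1)) (B' := fun _ => (t - T1 + 1)⁻¹)
      (fun x hx => (((hP x (hT1 x hx.1).2)).sub
        ((hN x (hT1 x hx.1).2).const_mul _)).continuousAt.continuousWithinAt)
      (fun x hx => (((hP x (hT1 x hx.1).2)).sub
        ((hN x (hT1 x hx.1).2).const_mul _)).hasDerivWithinAt)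
      (by simpa using hM1)
      (fun x => by simpa using (((hasDerivAt_id x).sub_const T1).const_mul
        ((t - T1 + 1)⁻¹)).const_add M)
      (fun x hx hxe => by
        have h1 : 0 ≤ (t - T1 + 1)⁻¹ * (x - T1) :=
          mul_nonneg (inv_nonneg.2 hc.le) (by linarith [hx.1])
        have h2 : P' x ≤ 0 := (hT1 x hx.1).1 (by linarith)
        have h3 := hN' x (hT1 x hx.1).2
        have h4 : 0 < (t - T1 + 1)⁻¹ := inv_pos.2 hc
        have h5 : 0 ≤ ε / 2 * N' x := by positivity
        linarith) ⟨ht, le_rfl⟩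
    refine this.trans ?_
    have : (t - T1 + 1)⁻¹ * (t - T1) ≤ 1 := by
      rw [inv_mul_le_iff₀ hc]; linarith
    simpa using this
  filter_upwards [eventually_ge_atTop T1, hNtop.eventually_gt_atTop 0,
    hNtop.eventually_gt_atTop ((M + 1) / (ε / 2))] with t ht hN0 hNM
  have h1 := key t ht
  rw [div_lt_iff₀ (half_pos hε)] at hNM
  rw [Real.dist_eq, sub_zero, abs_of_nonneg (div_nonneg (hP0 t) hN0.le), div_lt_iff₀ hN0]
  linarith

/-! ### The two losses -/

/-- The properties of the exponential and logistic losses that the argument relies on. -/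
structure GoodLoss (ℓ ℓ' : ℝ → ℝ) : Prop where
  deriv : ∀ x, HasDerivAt ℓ (ℓ' x) x
  pos : ∀ x, 0 < ℓ x
  neg : ∀ x, ℓ' x < 0
  steep : ∀ ε > 0, ∃ η > 0, ∀ x, ε ≤ ℓ x → η ≤ -ℓ' x
  lower : ∀ x, 0 ≤ x → Real.exp (-x) / 2 ≤ -ℓ' x
  upper : ∀ x, -ℓ' x ≤ Real.exp (-x)

lemma goodLoss_exp : GoodLoss (fun s : ℝ => Real.exp (-s)) (fun s : ℝ => -Real.exp (-s)) where
  deriv x := by simpa using (hasDerivAt_neg x).exp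
  pos x := Real.exp_pos _
  neg x := neg_neg_of_pos (Real.exp_pos _)
  steep ε hε := ⟨ε, hε, fun x hx => by simpa using hx⟩
  lower x _ := by have := Real.exp_pos (-x); linarith
  upper x := by simp

lemma goodLoss_log : GoodLoss (fun s : ℝ => Real.log (1 + Real.exp (-s)))
    (fun s : ℝ => -Real.exp (-s) / (1 + Real.exp (-s))) where
  deriv x := by
    have := Real.exp_pos (-x)
    simpa using (((hasDerivAt_neg x).exp).const_add 1).log (by positivity)
  pos x := Real.log_pos (by have := Real.exp_pos (-x); linarith)
  neg x := by
    have := Real.exp_pos (-x)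
    exact div_neg_of_neg_of_pos (by linarith) (by linarith)
  steep ε hε := by
    refine ⟨1 - Real.exp (-ε), by simpa using hε, fun x hx => ?_⟩
    have := Real.exp_pos (-x)
    -- the slope is a function of the loss: `-ℓ' = 1 - exp (-ℓ)`
    have e : -(-Real.exp (-x) / (1 + Real.exp (-x)))
        = 1 - Real.exp (-Real.log (1 + Real.exp (-x))) := by
      rw [Real.exp_neg (Real.log _), Real.exp_log (by positivity)]
      field_simp
      ring
    rw [e]
    have := Real.exp_le_exp.2 (neg_le_neg hx)
    linarith
  lower x hx := by
    have h := Real.exp_pos (-x)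
    have h1 : Real.exp (-x) ≤ 1 := Real.exp_le_one_iff.2 (by linarith)
    rw [neg_div, neg_neg]
    exact div_le_div_of_nonneg_left h.le (by positivity) (by linarith)
  upper x := by
    have h := Real.exp_pos (-x)
    rw [neg_div, neg_neg]
    exact div_le_self h.le (by linarith)

lemma GoodLoss.strictAnti {ℓ ℓ' : ℝ → ℝ} (h : GoodLoss ℓ ℓ') : StrictAnti ℓ :=
  strictAnti_of_deriv_neg fun x => by rw [(h.deriv x).deriv]; exact h.neg x

/-! ### The maximum-margin direction -/

/-- By definition of `α`, any `ξ ⟂ ū` has inner product at least `α ‖ξ‖` with some support vector.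
Positivity of `α` excludes the junk values of the infimum and the supremum. -/
lemma exists_support {n d : ℕ} {z : Fin n → Fin d → ℝ} {u : Fin d → ℝ} {γ : ℝ}
    (hα : 0 < alphaConst z u γ) {ξ : Fin d → ℝ} {ρ : ℝ} (hρ : 0 < ρ) (hξρ : ξ ⬝ᵥ ξ = ρ ^ 2)
    (hξ : ξ ⬝ᵥ u = 0) : ∃ i, u ⬝ᵥ z i = γ ∧ alphaConst z u γ * ρ ≤ ξ ⬝ᵥ z i := by
  set ζ := ρ⁻¹ • ξ with hζ
  have hζ1 : vecNorm ζ = 1 := by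
    have : vecNorm ζ ^ 2 = 1 := by
      rw [vecNorm_sq, hζ, smul_dotProduct, dotProduct_smul, hξρ, smul_eq_mul, smul_eq_mul]
      field_simp
    have h0 : 0 ≤ vecNorm ζ := Real.sqrt_nonneg _
    nlinarith
  have hζu : ζ ⬝ᵥ u = 0 := by rw [hζ, smul_dotProduct, hξ, smul_zero]
  set S := {r : ℝ | ∃ i : Fin n, u ⬝ᵥ z i = γ ∧ r = ζ ⬝ᵥ z i} with hS
  have hle : alphaConst z u γ ≤ sSup S := by
    unfold alphaConst at hα ⊢
    refine csInf_le ?_ ⟨ζ, hζ1, hζu, rfl⟩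
    by_contra hb
    rw [Real.sInf_of_not_bddBelow hb] at hα
    exact lt_irrefl _ hα
  have hfin : S.Finite := (Set.finite_range fun i => ζ ⬝ᵥ z i).subset (by
    rintro r ⟨i, _, rfl⟩; exact ⟨i, rfl⟩)
  have hne : S.Nonempty := by
    by_contra hne
    rw [Set.not_nonempty_iff_eq_empty.1 hne, Real.sSup_empty] at hle
    linarith
  obtain ⟨i, hi, e⟩ := hne.csSup_mem hfin
  refine ⟨i, hi, ?_⟩
  rw [e, hζ, smul_dotProduct, smul_eq_mul, ← div_eq_inv_mul, le_div_iff₀ hρ] at hle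
  exact hle

lemma dot_decomp {d : ℕ} (u w v : Fin d → ℝ) :
    w ⬝ᵥ v = (w ⬝ᵥ u) * (u ⬝ᵥ v) + projPerp u w ⬝ᵥ v := by
  rw [projPerp, sub_dotProduct, smul_dotProduct, smul_eq_mul]
  ring

lemma projPerp_dot {d : ℕ} {u : Fin d → ℝ} (hu : u ⬝ᵥ u = 1) (w : Fin d → ℝ) :
    projPerp u w ⬝ᵥ u = 0 := by
  rw [projPerp, sub_dotProduct, smul_dotProduct, hu, smul_eq_mul]
  ring

lemma projPerp_dot_self {d : ℕ} {u : Fin d → ℝ} (hu : u ⬝ᵥ u = 1) (w : Fin d → ℝ) :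
    projPerp u w ⬝ᵥ projPerp u w = w ⬝ᵥ w - (w ⬝ᵥ u) ^ 2 := by
  have h1 := dot_decomp u w w
  have h2 := dot_decomp u w (projPerp u w)
  have h3 := projPerp_dot hu w
  rw [dotProduct_comm u w] at h1
  rw [dotProduct_comm u, h3] at h2
  rw [dotProduct_comm w] at h2
  linarith

/-- If all margins are nonnegative and the part of `w` orthogonal to `ū` is long, then moving along
the negative gradient does not lengthen that part: the support vector opposing it
outweighs all data points favouring it. -/
lemma grad_dot_perp_nonneg {n d : ℕ} (hn : 0 < n) {ℓ ℓ' : ℝ → ℝ} (hℓ : GoodLoss ℓ ℓ')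
    {z : Fin n → Fin d → ℝ} {u : Fin d → ℝ} {γ : ℝ} (hγ : 0 < γ) (hu : u ⬝ᵥ u = 1)
    (hmargin : ∀ i, γ ≤ u ⬝ᵥ z i) (hα : 0 < alphaConst z u γ) {w : Fin d → ℝ}
    (hw : ∀ i, 0 ≤ w ⬝ᵥ z i)
    (hlarge : (2 * n / alphaConst z u γ) ^ 2 ≤ projPerp u w ⬝ᵥ projPerp u w) :
    0 ≤ gradRiskV ℓ' z w ⬝ᵥ projPerp u w := by
  set ξ := projPerp u w with hξ
  set q := w ⬝ᵥ u with hq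
  set α := alphaConst z u γ with hα'
  have hn' : (0 : ℝ) < n := Nat.cast_pos.2 hn
  obtain ⟨ρ, hρ0, hρ⟩ : ∃ ρ, 2 * n / α ≤ ρ ∧ ξ ⬝ᵥ ξ = ρ ^ 2 :=
    ⟨Real.sqrt (ξ ⬝ᵥ ξ), Real.le_sqrt_of_sq_le hlarge, (Real.sq_sqrt (dot_self_nonneg _)).symm⟩
  have hρpos : 0 < ρ := lt_of_lt_of_le (by positivity) hρ0
  rw [div_le_iff₀ hα] at hρ0
  obtain ⟨i₀, hi₀, hb₀⟩ := exists_support (z := z) hα hρpos (ξ := -ξ) (by simpa using hρ)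
    (by rw [neg_dotProduct, projPerp_dot hu, neg_zero])
  rw [neg_dotProduct] at hb₀
  have hm : ∀ i, w ⬝ᵥ z i = q * (u ⬝ᵥ z i) + ξ ⬝ᵥ z i := fun i => dot_decomp u w (z i)
  have hb₁ : ξ ⬝ᵥ z i₀ ≤ -(2 * n) := by linarith
  have hq0 : 0 ≤ q := by
    have h1 := hw i₀
    rw [hm, hi₀] at h1
    by_contra hneg
    nlinarith
  set E := Real.exp (-(q * γ)) with hE
  have hEpos : 0 < E := Real.exp_pos _
  -- each point contributes at most `E`, and the opposing support vector at most `-n E`, because its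
  -- inner product with `ξ` is below `-2 n`
  have hgood : ∀ i, -ℓ' (w ⬝ᵥ z i) * (ξ ⬝ᵥ z i) ≤ E := by
    intro i
    rcases le_total (ξ ⬝ᵥ z i) 0 with hb | hb
    · have := mul_nonneg_of_nonpos_of_nonpos (hℓ.neg (w ⬝ᵥ z i)).le hb
      linarith
    · have h1 : -ℓ' (w ⬝ᵥ z i) ≤ E * Real.exp (-(ξ ⬝ᵥ z i)) := by
        rw [hE, ← Real.exp_add]
        refine (hℓ.upper _).trans (Real.exp_le_exp.2 ?_)
        have := mul_le_mul_of_nonneg_left (hmargin i) hq0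
        rw [hm]; linarith
      have h2 : Real.exp (-(ξ ⬝ᵥ z i)) * (ξ ⬝ᵥ z i) ≤ 1 := by
        rw [Real.exp_neg, inv_mul_le_iff₀ (Real.exp_pos _)]
        have := Real.add_one_le_exp (ξ ⬝ᵥ z i)
        linarith
      calc _ ≤ E * Real.exp (-(ξ ⬝ᵥ z i)) * (ξ ⬝ᵥ z i) := mul_le_mul_of_nonneg_right h1 hb
        _ = E * (Real.exp (-(ξ ⬝ᵥ z i)) * (ξ ⬝ᵥ z i)) := by ring
        _ ≤ E * 1 := mul_le_mul_of_nonneg_left h2 hEpos.le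
        _ = E := mul_one E
  have hbad : -ℓ' (w ⬝ᵥ z i₀) * (ξ ⬝ᵥ z i₀) ≤ -(n * E) := by
    have h1 : E / 2 ≤ -ℓ' (w ⬝ᵥ z i₀) := by
      refine le_trans ?_ (hℓ.lower _ (hw i₀))
      have : E ≤ Real.exp (-(w ⬝ᵥ z i₀)) :=
        Real.exp_le_exp.2 (by rw [hm, hi₀]; linarith)
      linarith
    nlinarith [mul_le_mul_of_nonneg_right h1 (show 0 ≤ -(ξ ⬝ᵥ z i₀) by linarith)]
  have hsum : ∑ i, -ℓ' (w ⬝ᵥ z i) * (ξ ⬝ᵥ z i) ≤ 0 := by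
    calc _ ≤ ∑ i, (E - if i = i₀ then n * E else 0) := by
          refine Finset.sum_le_sum fun i _ => ?_
          split_ifs with h
          · subst h; linarith
          · linarith [hgood i]
      _ = 0 := by simp
  rw [gradRiskV, smul_dotProduct, sum_dotProduct, smul_eq_mul]
  refine mul_nonneg (by positivity) ?_
  have e : ∑ i, (ℓ' (w ⬝ᵥ z i) • z i) ⬝ᵥ ξ = -∑ i, -ℓ' (w ⬝ᵥ z i) * (ξ ⬝ᵥ z i) := by
    rw [← Finset.sum_neg_distrib]
    refine Finset.sum_congr rfl fun i _ => ?_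
    rw [smul_dotProduct, smul_eq_mul, dotProduct_comm (z i)]
    ring
  rw [e]
  linarith

/-- Every data point contributes at least `γ / n` times its slope to the component of `-∇R(w)`
along `ū`. -/
lemma grad_dot_lower {n d : ℕ} {ℓ ℓ' : ℝ → ℝ} (hℓ : GoodLoss ℓ ℓ')
    {z : Fin n → Fin d → ℝ} {u : Fin d → ℝ} {γ : ℝ} (hγ : 0 < γ)
    (hmargin : ∀ i, γ ≤ u ⬝ᵥ z i) (w : Fin d → ℝ) (i : Fin n) :
    (n : ℝ)⁻¹ * (-ℓ' (w ⬝ᵥ z i) * γ) ≤ -(gradRiskV ℓ' z w ⬝ᵥ u) := by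
  rw [gradRiskV, smul_dotProduct, sum_dotProduct, smul_eq_mul, ← mul_neg, ← Finset.sum_neg_distrib]
  refine mul_le_mul_of_nonneg_left ?_ (by positivity)
  have h : ∀ j, -ℓ' (w ⬝ᵥ z j) * γ ≤ -((ℓ' (w ⬝ᵥ z j) • z j) ⬝ᵥ u) := by
    intro j
    rw [smul_dotProduct, smul_eq_mul, dotProduct_comm (z j), ← neg_mul]
    exact mul_le_mul_of_nonneg_left (hmargin j) (by have := hℓ.neg (w ⬝ᵥ z j); linarith)
  refine (h i).trans (Finset.single_le_sum
    (f := fun j => -((ℓ' (w ⬝ᵥ z j) • z j) ⬝ᵥ u)) (fun j _ => ?_) (Finset.mem_univ i))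
  refine le_trans (mul_nonneg ?_ hγ.le) (h j)
  have := hℓ.neg (w ⬝ᵥ z j)
  linarith

/-! ### Alignment of adjacent layers -/

lemma mul_gram_pow {p q : Type*} [Fintype p] [Fintype q] [DecidableEq p] [DecidableEq q]
    (B : Matrix p q ℝ) (k : ℕ) : B * (Bᵀ * B) ^ k * Bᵀ = (B * Bᵀ) ^ (k+1) := by
  induction k with
  | zero => simp
  | succ k ih =>
    rw [pow_succ (B * Bᵀ) (k+1), ← ih, pow_succ]
    simp only [Matrix.mul_assoc]

/-- Exactly balanced normalized layers lose no norm in the product, because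
`P Pᵀ = (A_j A_jᵀ)^(j+1)` for the partial product `P = A_j ⋯ A_0`. -/
lemma nsq_prodUpTo_eq_one {dim : ℕ → ℕ} {m : ℕ} (hdim : dim (m+1) = 1) (A : Layers dim)
    (h1 : nsq (A m) = 1) (h : ∀ k < m, (A (k+1))ᵀ * A (k+1) = A k * (A k)ᵀ) :
    nsq (prodUpTo A (m+1)) = 1 := by
  have key : ∀ j ≤ m, prodUpTo A (j+1) * (prodUpTo A (j+1))ᵀ = (A j * (A j)ᵀ) ^ (j+1) := by
    intro j
    induction j with
    | zero => intro _; simp [prodUpTo]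
    | succ j ih =>
      intro hj
      rw [prodUpTo, transpose_mul, ← mul_gram_pow, h j (by omega), ← ih (by omega)]
      simp only [Matrix.mul_assoc]
  have : Unique (Fin (dim (m+1))) := (finCongr hdim).unique
  have hA : A m * (A m)ᵀ = 1 := by
    rw [nsq_eq_trace'] at h1
    ext i j
    rw [Subsingleton.elim i default, Subsingleton.elim j default]
    simpa [trace] using h1
  rw [nsq_eq_trace', key m le_rfl, hA, one_pow, trace_one, Fintype.card_unique, Nat.cast_one]

lemma continuous_prodUpTo {dim : ℕ → ℕ} (j : ℕ) :
    Continuous fun A : Layers dim => prodUpTo A j := by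
  induction j with
  | zero => exact continuous_const
  | succ j ih => exact (continuous_apply j).matrix_mul ih

lemma continuous_nsq {p q : Type*} [Fintype p] [Fintype q] :
    Continuous fun M : Matrix p q ℝ => nsq M :=
  continuous_finsetSum _ fun i _ => continuous_finsetSum _ fun j _ =>
    (continuous_id.matrix_elem i j).pow 2

/-- Asymptotic alignment. Normalized layers live in a compact set, so it is enough to look at their
limits along ultrafilters, which are exactly balanced. -/
lemma tendsto_nsq_prodUpTo {dim : ℕ → ℕ} {m : ℕ} (hdim : dim (m+1) = 1) (A : ℝ → Layers dim)
    (hA : ∀ t k, nsq (A t k) ≤ 1) (h1 : ∀ᶠ t in atTop, nsq (A t m) = 1)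
    (h : ∀ k < m, ∃ (r s : ℝ → ℝ) (C : Matrix (Fin (dim (k+1))) (Fin (dim (k+1))) ℝ),
      Tendsto r atTop (nhds 1) ∧ Tendsto s atTop (nhds 0) ∧ ∀ᶠ t in atTop,
        (A t (k+1))ᵀ * A t (k+1) = r t • (A t k * (A t k)ᵀ) + s t • C) :
    Tendsto (fun t => nsq (prodUpTo (A t) (m+1))) atTop (nhds 1) := by
  rw [tendsto_iff_ultrafilter]
  intro g hg
  set K : Set (Layers dim) := Set.pi Set.univ fun k =>
    (Set.pi Set.univ fun i => Set.pi Set.univ fun j => Set.Icc (-1 : ℝ) 1 :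
      Set (Fin (dim (k+1)) → Fin (dim k) → ℝ)) with hK
  have hKc : IsCompact K := isCompact_univ_pi fun k => isCompact_univ_pi fun i =>
    isCompact_univ_pi fun j => isCompact_Icc
  have hmem : ∀ t, A t ∈ K := by
    intro t k _ i _ j _
    have h2 : A t k i j ^ 2 ≤ 1 := by
      refine le_trans ?_ (hA t k)
      refine le_trans ?_ (Finset.single_le_sum (f := fun i => ∑ j, A t k i j ^ 2)
        (fun _ _ => Finset.sum_nonneg fun _ _ => sq_nonneg _) (Finset.mem_univ i))
      exact Finset.single_le_sum (f := fun j => A t k i j ^ 2)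
        (fun _ _ => sq_nonneg _) (Finset.mem_univ j)
    exact abs_le.1 ((sq_le_one_iff_abs_le_one _).1 h2)
  obtain ⟨B, -, hB⟩ := hKc.ultrafilter_le_nhds (g.map A)
    (le_principal_iff.2 (Filter.mem_map.2 (Filter.univ_mem' hmem)))
  have hB' : Tendsto A g (nhds B) := hB
  have hBk : ∀ k, Tendsto (fun t => A t k) g (nhds (B k)) := fun k =>
    ((continuous_apply k).tendsto B).comp hB'
  have hB1 : nsq (B m) = 1 :=
    tendsto_nhds_unique ((continuous_nsq.tendsto (B m)).comp (hBk m))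
      (tendsto_const_nhds.congr' ((h1.filter_mono hg).mono fun t ht => ht.symm))
  have hBb : ∀ k < m, (B (k+1))ᵀ * B (k+1) = B k * (B k)ᵀ := by
    intro k hk
    obtain ⟨r, s, C, hr, hs, he⟩ := h k hk
    have c1 : Continuous fun M : Matrix (Fin (dim (k+1+1))) (Fin (dim (k+1))) ℝ => Mᵀ * M :=
      continuous_id.matrix_transpose.matrix_mul continuous_id
    have c2 : Continuous fun M : Matrix (Fin (dim (k+1))) (Fin (dim k)) ℝ => M * Mᵀ :=
      continuous_id.matrix_mul continuous_id.matrix_transpose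
    have t1 := (c1.tendsto _).comp (hBk (k+1))
    have t2 := ((hr.mono_left hg).smul ((c2.tendsto _).comp (hBk k))).add
      ((hs.mono_left hg).smul_const C)
    rw [one_smul, zero_smul, add_zero] at t2
    exact tendsto_nhds_unique t1 (t2.congr' ((he.filter_mono hg).mono fun t ht => ht.symm))
  rw [← nsq_prodUpTo_eq_one hdim B hB1 hBb]
  exact ((continuous_nsq.comp (continuous_prodUpTo (m+1))).tendsto B).comp hB'

/-! ### The risk vanishes -/

lemma eq_zero_of_nsq {p q : Type*} [Fintype p] [Fintype q] {M : Matrix p q ℝ} (h : nsq M = 0) :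
    M = 0 := by
  have h1 := fun i => (Finset.sum_eq_zero_iff_of_nonneg fun _ _ =>
    Finset.sum_nonneg fun _ _ => sq_nonneg _).1 h i (Finset.mem_univ i)
  ext i j
  simpa using (Finset.sum_eq_zero_iff_of_nonneg fun _ _ => sq_nonneg _).1 (h1 i) j
    (Finset.mem_univ j)

/-- Every margin tends to infinity: otherwise the risk, hence `‖∇R(w)‖`, would stay bounded below
while `‖w‖` is bounded below because the risk is smaller than `ℓ 0`, and the bottom layer alone
would make the risk decrease forever. -/
lemma IsGradientFlow.eventually_margin {dim : ℕ → ℕ} {L n : ℕ} (hL : 0 < L) (hdimL : dim L = 1)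
    (hn : 0 < n) {z : Fin n → Fin (dim 0) → ℝ} (hz : ∀ i, z i ⬝ᵥ z i ≤ 1)
    {γ : ℝ} (hγ : 0 < γ) {u : Fin (dim 0) → ℝ} (hu : u ⬝ᵥ u = 1) (hmargin : ∀ i, γ ≤ u ⬝ᵥ z i)
    {ℓ ℓ' : ℝ → ℝ} (hℓ : GoodLoss ℓ ℓ') {W : ℝ → Layers dim} (hW : IsGradientFlow L ℓ' z W)
    (hgrad : ∃ k < L, gradLayer L ℓ' z (W 0) k ≠ 0) (hrisk : riskW L ℓ z (W 0) ≤ ℓ 0) (M : ℝ) :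
    ∀ᶠ t in atTop, ∀ i, M < wprod L (W t) ⬝ᵥ z i := by
  have hn' : (0 : ℝ) < n := Nat.cast_pos.2 hn
  have : Nonempty (Fin n) := ⟨⟨0, hn⟩⟩
  set R : ℝ → ℝ := fun t => riskW L ℓ z (W t) with hR
  have hRd : ∀ t, 0 ≤ t → HasDerivAt R (-gradNormSq L ℓ' z (W t)) t := fun t ht =>
    hW.hasDerivAt_risk hℓ.deriv ht
  have hG0 : ∀ t, 0 ≤ gradNormSq L ℓ' z (W t) := fun t => Finset.sum_nonneg fun _ _ => sq_nonneg _
  have hanti : ∀ s t, 0 ≤ s → s ≤ t → R t ≤ R s := fun s t hs hst =>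
    le_of_hasDerivAt_nonpos hRd (fun t _ => neg_nonpos.2 (hG0 t)) hs hst
  have hRsum : ∀ t, n * R t = ∑ i, ℓ (wprod L (W t) ⬝ᵥ z i) := fun t => by
    simp only [hR, riskW, riskV]
    rw [mul_inv_cancel_left₀ hn'.ne']
  have hRpos : ∀ t, 0 ≤ R t := fun t =>
    mul_nonneg (by positivity) (Finset.sum_nonneg fun _ _ => (hℓ.pos _).le)
  have hsmall : ∀ ε > 0, ∃ t, 0 ≤ t ∧ R t < ε := by
    intro ε hε
    by_contra! hbig
    obtain ⟨T, hT0, hT⟩ : ∃ T, 0 ≤ T ∧ R T < ℓ 0 := by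
      by_contra! hconst
      have hc : ∀ t ∈ Set.Ici (0 : ℝ), R t = ℓ 0 := fun t ht =>
        le_antisymm ((hanti 0 t le_rfl ht).trans hrisk) (hconst t ht)
      have h1 : HasDerivWithinAt R 0 (Set.Ici 0) 0 :=
        (hasDerivWithinAt_const (0 : ℝ) (Set.Ici 0) (ℓ 0)).congr hc (hc 0 Set.self_mem_Ici)
      have h2 := (uniqueDiffOn_Ici (0 : ℝ) 0 Set.self_mem_Ici).eq_deriv _ h1
        (hRd 0 le_rfl).hasDerivWithinAt
      obtain ⟨k, hk, hne⟩ := hgrad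
      apply hne
      have h3 : frobNorm (gradLayer L ℓ' z (W 0) k) ^ 2 = 0 :=
        (Finset.sum_eq_zero_iff_of_nonneg fun _ _ => sq_nonneg _).1
          (show gradNormSq L ℓ' z (W 0) = 0 by linarith) k (Finset.mem_range.2 hk)
      exact eq_zero_of_nsq (by rwa [frobNorm_sq] at h3)
    have hev : ∀ᶠ c in nhdsWithin (0 : ℝ) (Set.Ioi 0), R T < ℓ c ∧ 0 < c :=
      (((hℓ.deriv 0).continuousAt.eventually (lt_mem_nhds hT)).filter_mono
        nhdsWithin_le_nhds).and self_mem_nhdsWithin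
    obtain ⟨c, hcT, hc⟩ := hev.exists
    obtain ⟨η, hη, hsteep⟩ := hℓ.steep ε hε
    set κ := c * ((n : ℝ)⁻¹ * (η * γ)) with hκ
    have hκpos : 0 < κ := by positivity
    have hw : ∀ t, T ≤ t → c ^ 2 ≤ wprod L (W t) ⬝ᵥ wprod L (W t) := by
      intro t ht
      obtain ⟨i, hi⟩ : ∃ i, ℓ (wprod L (W t) ⬝ᵥ z i) < ℓ c := by
        by_contra! hcon
        have h1 := Finset.sum_le_sum fun i (_ : i ∈ Finset.univ) => hcon i
        rw [← hRsum, Finset.sum_const, Finset.card_univ, Fintype.card_fin, nsmul_eq_mul] at h1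
        have h2 := le_of_mul_le_mul_left h1 hn'
        linarith [hanti T t hT0 ht]
      have h1 := hℓ.strictAnti.lt_iff_gt.1 hi
      have h2 := dot_sq_le (wprod L (W t)) (z i)
      have h3 := mul_le_mul_of_nonneg_left (hz i) (dot_self_nonneg (wprod L (W t)))
      nlinarith
    have hg : ∀ t, T ≤ t → ((n : ℝ)⁻¹ * (η * γ)) ^ 2
        ≤ gradRiskV ℓ' z (wprod L (W t)) ⬝ᵥ gradRiskV ℓ' z (wprod L (W t)) := by
      intro t ht
      obtain ⟨i, hi⟩ : ∃ i, ε ≤ ℓ (wprod L (W t) ⬝ᵥ z i) := by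
        by_contra! hcon
        have h1 := Finset.sum_lt_sum_of_nonempty Finset.univ_nonempty
          fun i (_ : i ∈ Finset.univ) => hcon i
        rw [← hRsum, Finset.sum_const, Finset.card_univ, Fintype.card_fin, nsmul_eq_mul] at h1
        have h2 := lt_of_mul_lt_mul_left h1 hn'.le
        linarith [hbig t (hT0.trans ht)]
      have h1 := grad_dot_lower hℓ hγ hmargin (wprod L (W t)) i
      have h2 : (n : ℝ)⁻¹ * (η * γ) ≤ (n : ℝ)⁻¹ * (-ℓ' (wprod L (W t) ⬝ᵥ z i) * γ) := by
        have := hsteep _ hi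
        gcongr
      have h3 := dot_sq_le (gradRiskV ℓ' z (wprod L (W t))) u
      rw [hu, mul_one] at h3
      have h4 : 0 < (n : ℝ)⁻¹ * (η * γ) := by positivity
      nlinarith
    have hprod : ∀ t, T ≤ t → κ ^ 2 ≤ (wprod L (W t) ⬝ᵥ wprod L (W t))
        * (gradRiskV ℓ' z (wprod L (W t)) ⬝ᵥ gradRiskV ℓ' z (wprod L (W t))) := by
      intro t ht
      rw [hκ, mul_pow]
      exact mul_le_mul (hw t ht) (hg t ht) (sq_nonneg _) (dot_self_nonneg _)
    have hsN : ∀ t, (wprod L (W t) ⬝ᵥ wprod L (W t))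
        * (gradRiskV ℓ' z (wprod L (W t)) ⬝ᵥ gradRiskV ℓ' z (wprod L (W t)))
        ≤ gradNormSq L ℓ' z (W t) * nsq (W t 0) := by
      intro t
      refine (dot_mul_dot_le_nsq hL hdimL ℓ' z (W t)).trans
        (mul_le_mul_of_nonneg_right ?_ (nsq_nonneg _))
      rw [← frobNorm_sq]
      exact Finset.single_le_sum (f := fun k => frobNorm (gradLayer L ℓ' z (W t) k) ^ 2)
        (fun _ _ => sq_nonneg _) (Finset.mem_range.2 hL)
    refine false_of_persistent_decrease (R := R) (N := fun t => nsq (W t 0))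
      (s := fun t => gradNormSq L ℓ' z (W t)) (T := T) (K := 2 / κ) (δ := κ ^ 2)
      (fun t ht => hRd t (hT0.trans ht)) (fun t ht => hW.hasDerivAt_nsq (hT0.trans ht) 0 hL)
      (fun t _ => hRpos t) (fun t _ => nsq_nonneg _) (fun t _ => hG0 t) (fun t _ => le_rfl)
      (fun t ht => ?_) (fun t ht => (hprod t ht).trans (hsN t)) (by positivity) (by positivity)
    have h1 := hprod t ht
    have h2 := hsN t
    have h3 := dot_sq_le (gradRiskV ℓ' z (wprod L (W t))) (wprod L (W t))
    rw [mul_comm (_ ⬝ᵥ _) (wprod L (W t) ⬝ᵥ _)] at h3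
    set Q := (wprod L (W t) ⬝ᵥ wprod L (W t))
        * (gradRiskV ℓ' z (wprod L (W t)) ⬝ᵥ gradRiskV ℓ' z (wprod L (W t)))
    -- `⟨∇R, w⟩² ≤ Q` and `κ² ≤ Q` give `κ |⟨∇R, w⟩| ≤ Q`
    have h4 : κ * |gradRiskV ℓ' z (wprod L (W t)) ⬝ᵥ wprod L (W t)| ≤ Q := by
      refine abs_le_of_sq_le_sq' (a := κ * |gradRiskV ℓ' z (wprod L (W t)) ⬝ᵥ wprod L (W t)|)
        ?_ ((sq_nonneg κ).trans h1) |>.2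
      rw [mul_pow, sq_abs, sq Q]
      exact mul_le_mul h1 h3 (sq_nonneg _) ((sq_nonneg κ).trans h1)
    have h5 := neg_abs_le (gradRiskV ℓ' z (wprod L (W t)) ⬝ᵥ wprod L (W t))
    rw [div_mul_eq_mul_div, le_div_iff₀ hκpos]
    nlinarith
  obtain ⟨t₀, ht₀, hlt⟩ := hsmall (ℓ M / n) (div_pos (hℓ.pos M) hn')
  filter_upwards [eventually_ge_atTop t₀] with t ht i
  rw [lt_div_iff₀ hn', mul_comm] at hlt
  have h1 : ℓ (wprod L (W t) ⬝ᵥ z i) ≤ n * R t := by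
    rw [hRsum]
    exact Finset.single_le_sum (f := fun i => ℓ (wprod L (W t) ⬝ᵥ z i))
      (fun _ _ => (hℓ.pos _).le) (Finset.mem_univ i)
  have h2 := mul_le_mul_of_nonneg_left (hanti t₀ t ht₀ ht) hn'.le
  exact hℓ.strictAnti.lt_iff_gt.1 (by linarith)

/-! ### Convergence of the direction -/

lemma IsGradientFlow.nsq_eq_add {dim : ℕ → ℕ} {L n : ℕ} {ℓ' : ℝ → ℝ}
    {z : Fin n → Fin (dim 0) → ℝ} {W : ℝ → Layers dim} (hW : IsGradientFlow L ℓ' z W)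
    (k : ℕ) (hk : k < L) : ∃ c : ℝ, ∀ t, 0 ≤ t → nsq (W t k) = nsq (W t 0) + c := by
  induction k with
  | zero => exact ⟨0, fun t _ => (add_zero _).symm⟩
  | succ k ih =>
    obtain ⟨c, hc⟩ := ih (by omega)
    obtain ⟨C, hC⟩ := hW.balanced k hk
    refine ⟨c + trace C, fun t ht => ?_⟩
    rw [nsq_eq_trace, hC t ht, trace_add, ← nsq_eq_trace', hc t ht, add_assoc]

/-- Separable data with nonnegative margins forces `⟨w, ū⟩ ≥ 0`: some support vector opposes the
part of `w` orthogonal to `ū`. -/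
lemma dot_nonneg_of_margin {n d : ℕ} (hn : 0 < n) {z : Fin n → Fin d → ℝ} {u : Fin d → ℝ} {γ : ℝ}
    (hγ : 0 < γ) (hu : u ⬝ᵥ u = 1) (hmargin : ∀ i, γ ≤ u ⬝ᵥ z i) (hα : 0 < alphaConst z u γ)
    {w : Fin d → ℝ} (hw : ∀ i, 0 ≤ w ⬝ᵥ z i) : 0 ≤ w ⬝ᵥ u := by
  by_contra! hneg
  rcases (dot_self_nonneg (projPerp u w)).eq_or_lt with h0 | hpos
  · have h1 := dot_sq_le (projPerp u w) (z ⟨0, hn⟩)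
    rw [← h0, zero_mul] at h1
    have h2 := hw ⟨0, hn⟩
    rw [dot_decomp u, pow_eq_zero_iff two_ne_zero |>.1 (le_antisymm h1 (sq_nonneg _))] at h2
    nlinarith [hmargin ⟨0, hn⟩]
  · obtain ⟨i, hi, hb⟩ := exists_support (z := z) hα (Real.sqrt_pos.2 hpos) (ξ := -projPerp u w)
      (by rw [Real.sq_sqrt hpos.le]; simp) (by rw [neg_dotProduct, projPerp_dot hu, neg_zero])
    have h1 := hw i
    rw [dot_decomp u, hi] at h1
    rw [neg_dotProduct] at hb
    have := mul_pos hα (Real.sqrt_pos.2 hpos)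
    nlinarith

/-- The orthogonal part of the output is controlled by the orthogonal part of the bottom layer. -/
lemma wprod_perp_le {dim : ℕ → ℕ} {L : ℕ} (hL : 0 < L) (hdimL : dim L = 1) (A : Layers dim)
    (hA : ∀ k, nsq (A k) ≤ 1) {u : Fin (dim 0) → ℝ} (hu : u ⬝ᵥ u = 1) :
    projPerp u (wprod L A) ⬝ᵥ projPerp u (wprod L A)
      ≤ nsq (A 0) - (A 0).mulVec u ⬝ᵥ (A 0).mulVec u := by
  set v := projPerp u (wprod L A) with hv
  have hvu : v ⬝ᵥ u = 0 := projPerp_dot hu _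
  have h1 := wprod_dot_sq_le hL hdimL A hA v
  have h2 : wprod L A ⬝ᵥ v = v ⬝ᵥ v := by
    rw [dot_decomp u, dotProduct_comm u, hvu, mul_zero, zero_add]
  have h3 : (A 0).mulVec v ⬝ᵥ (A 0).mulVec v
      ≤ (nsq (A 0) - (A 0).mulVec u ⬝ᵥ (A 0).mulVec u) * (v ⬝ᵥ v) := by
    rw [nsq, dotProduct, dotProduct, ← Finset.sum_sub_distrib, Finset.sum_mul]
    refine Finset.sum_le_sum fun i _ => ?_
    have h4 : A 0 i ⬝ᵥ v = projPerp u (A 0 i) ⬝ᵥ v := by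
      rw [dot_decomp u, dotProduct_comm u, hvu, mul_zero, zero_add]
    have h5 := dot_sq_le (projPerp u (A 0 i)) v
    rw [← h4, projPerp_dot_self hu] at h5
    simp only [mulVec, ← sq]
    refine h5.trans (le_of_eq ?_)
    simp only [dotProduct, sq]
  rw [h2] at h1
  have h6 := h1.trans h3
  rcases (dot_self_nonneg v).eq_or_lt with h0 | hpos
  · rw [← h0]
    have := mulVec_dot_self_le (A 0) u
    rw [hu, mul_one] at this
    linarith
  · rw [sq] at h6
    exact le_of_mul_le_mul_right h6 hpos

/-- The layers scaled to unit Frobenius norm; a zero layer stays zero. -/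
def unitLayers {dim : ℕ → ℕ} (W : Layers dim) : Layers dim := fun k => (frobNorm (W k))⁻¹ • W k

lemma inv_frobNorm_sq {p q : Type*} [Fintype p] [Fintype q] (M : Matrix p q ℝ) :
    (frobNorm M)⁻¹ ^ 2 = (nsq M)⁻¹ := by rw [inv_pow, frobNorm_sq]

lemma nsq_unitLayers {dim : ℕ → ℕ} (W : Layers dim) (k : ℕ) :
    nsq (unitLayers W k) = (nsq (W k))⁻¹ * nsq (W k) := by
  rw [unitLayers, nsq_smul, inv_frobNorm_sq]

lemma wprod_unitLayers {dim : ℕ → ℕ} (L : ℕ) (W : Layers dim) :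
    wprod L (unitLayers W) = (∏ k ∈ Finset.range L, frobNorm (W k))⁻¹ • wprod L W := by
  rw [← Finset.prod_inv_distrib]
  exact wprod_smul L W _

lemma unitLayers_mulVec_dot_self {dim : ℕ → ℕ} (W : Layers dim) (v : Fin (dim 0) → ℝ) :
    (unitLayers W 0).mulVec v ⬝ᵥ (unitLayers W 0).mulVec v
      = (nsq (W 0))⁻¹ * ((W 0).mulVec v ⬝ᵥ (W 0).mulVec v) := by
  rw [unitLayers, smul_mulVec, smul_dotProduct, dotProduct_smul, smul_eq_mul, smul_eq_mul,
    ← inv_frobNorm_sq]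
  ring

theorem stmt12
    (dim : ℕ → ℕ) (L n : ℕ) (hL : 1 ≤ L) (hdimL : dim L = 1) (hn : 0 < n)
    (x : Fin n → Fin (dim 0) → ℝ) (y : Fin n → ℝ) (z : Fin n → Fin (dim 0) → ℝ)
    (hx : ∀ i, vecNorm (x i) ≤ 1) (hy : ∀ i, y i = 1 ∨ y i = -1)
    (hz : ∀ i, z i = y i • x i)
    (γ : ℝ) (hγ : 0 < γ) (ubar : Fin (dim 0) → ℝ) (hubar_unit : vecNorm ubar = 1)
    (hubar_margin : ∀ i, γ ≤ ubar ⬝ᵥ z i)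
    (hubar_max : ∀ u' : Fin (dim 0) → ℝ, vecNorm u' = 1 → ∃ i, u' ⬝ᵥ z i ≤ γ)
    (ℓ ℓ' : ℝ → ℝ)
    (hloss : ((ℓ = fun s : ℝ => Real.exp (-s)) ∧ (ℓ' = fun s : ℝ => -Real.exp (-s)))
      ∨ ((ℓ = fun s : ℝ => Real.log (1 + Real.exp (-s)))
          ∧ (ℓ' = fun s : ℝ => -Real.exp (-s) / (1 + Real.exp (-s)))))
    (W : ℝ → Layers dim) (hflow : IsGradientFlow L ℓ' z W)
    (hinit_grad : ∃ k < L, gradLayer L ℓ' z (W 0) k ≠ 0)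
    (hinit_risk : riskW L ℓ z (W 0) ≤ ℓ 0)
    (halpha : 0 < alphaConst z ubar γ) :
    Tendsto (fun t : ℝ =>
        Finset.univ.inf' ⟨⟨0, hn⟩, Finset.mem_univ _⟩
          (fun i : Fin n =>
            (∏ k ∈ Finset.range L, frobNorm (W t k))⁻¹ * (wprod L (W t) ⬝ᵥ z i)))
      atTop (nhds γ) := by
  have hu : ubar ⬝ᵥ ubar = 1 := by rw [← vecNorm_sq, hubar_unit, one_pow]
  have hL0 : 0 < L := hL
  have hzz : ∀ i, z i ⬝ᵥ z i ≤ 1 := by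
    intro i
    have h1 : vecNorm (x i) ^ 2 ≤ 1 := pow_le_one₀ (Real.sqrt_nonneg _) (hx i)
    have h2 : y i * y i = 1 := by rcases hy i with h | h <;> rw [h] <;> norm_num
    rw [hz i, smul_dotProduct, dotProduct_smul, smul_eq_mul, smul_eq_mul, ← mul_assoc, h2, one_mul,
      ← vecNorm_sq]
    exact h1
  have hℓ : GoodLoss ℓ ℓ' := by
    rcases hloss with ⟨rfl, rfl⟩ | ⟨rfl, rfl⟩
    exacts [goodLoss_exp, goodLoss_log]
  have hmarg := hflow.eventually_margin hL0 hdimL hn hzz hγ hu hubar_margin hℓ hinit_grad hinit_risk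
  set w : ℝ → Fin (dim 0) → ℝ := fun t => wprod L (W t) with hw
  set A : ℝ → Layers dim := fun t => unitLayers (W t) with hA
  set v : ℝ → Fin (dim 0) → ℝ := fun t => wprod L (A t) with hv
  set Pr : ℝ → ℝ := fun t => ∏ k ∈ Finset.range L, frobNorm (W t k) with hPr
  have hvw : ∀ t, v t = (Pr t)⁻¹ • w t := fun t => wprod_unitLayers L (W t)
  have hA1 : ∀ t k, nsq (A t k) ≤ 1 := fun t k => by
    rw [hA, nsq_unitLayers]
    exact inv_mul_le_one
  -- the layers grow without bound
  have hwPr : ∀ t, w t ⬝ᵥ w t ≤ Pr t ^ 2 := fun t => by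
    rw [hw, wprod_dot_self hdimL, hPr, ← Finset.prod_pow]
    simp only [frobNorm_sq]
    exact nsq_prodUpTo_le_prod hdimL _
  have hwtop : Tendsto (fun t => w t ⬝ᵥ w t) atTop atTop := by
    rw [tendsto_atTop]
    intro b
    filter_upwards [hmarg (|b| + 1)] with t ht
    have h1 := ht ⟨0, hn⟩
    have h2 := dot_sq_le (w t) (z ⟨0, hn⟩)
    have h3 := mul_le_mul_of_nonneg_left (hzz ⟨0, hn⟩) (dot_self_nonneg (w t))
    have h4 := le_abs_self b
    nlinarith [abs_nonneg b]
  have hPrtop : Tendsto (fun t => Pr t ^ 2) atTop atTop := tendsto_atTop_mono hwPr hwtop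
  have hc : ∀ k, ∃ c : ℝ, k < L → ∀ t, 0 ≤ t → nsq (W t k) = nsq (W t 0) + c := fun k => by
    by_cases hk : k < L
    · obtain ⟨c, hc⟩ := hflow.nsq_eq_add k hk
      exact ⟨c, fun _ => hc⟩
    · exact ⟨0, fun h => absurd h hk⟩
  choose c hc using hc
  have hN0top : Tendsto (fun t => nsq (W t 0)) atTop atTop := by
    set C := ∑ k ∈ Finset.range L, |c k| with hC
    rw [tendsto_atTop]
    intro b
    filter_upwards [eventually_ge_atTop 0, hPrtop.eventually_gt_atTop ((b + C) ^ L)] with t ht hgt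
    by_contra! hlt
    refine absurd hgt (not_lt.2 ?_)
    rw [hPr, ← Finset.prod_pow]
    simp only [frobNorm_sq]
    calc _ ≤ ∏ _k ∈ Finset.range L, (b + C) := by
          refine Finset.prod_le_prod (fun _ _ => nsq_nonneg _) fun k hk => ?_
          rw [hc k (Finset.mem_range.1 hk) t ht]
          have h1 := Finset.single_le_sum (f := fun k => |c k|) (fun _ _ => abs_nonneg _) hk
          have h2 := le_abs_self (c k)
          linarith
      _ = _ := by rw [Finset.prod_const, Finset.card_range]
  have hNtop : ∀ k < L, Tendsto (fun t => nsq (W t k)) atTop atTop := fun k hk =>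
    (tendsto_atTop_add_const_right _ (c k) hN0top).congr'
      ((eventually_ge_atTop 0).mono fun t ht => (hc k hk t ht).symm)
  -- alignment: the normalized product has norm tending to one
  have halign : Tendsto (fun t => v t ⬝ᵥ v t) atTop (nhds 1) := by
    obtain ⟨m, rfl⟩ : ∃ m, L = m + 1 := ⟨L - 1, by omega⟩
    simp only [hv, wprod_dot_self hdimL]
    refine tendsto_nsq_prodUpTo hdimL A hA1 ?_ fun k hk => ?_
    · filter_upwards [(hNtop m (by omega)).eventually_gt_atTop 0] with t ht
      rw [hA, nsq_unitLayers, inv_mul_cancel₀ ht.ne']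
    · obtain ⟨C, hC⟩ := hflow.balanced k (by omega)
      have hinv := tendsto_inv_atTop_zero.comp (hNtop (k+1) (by omega))
      refine ⟨fun t => 1 - trace C * (nsq (W t (k+1)))⁻¹, fun t => (nsq (W t (k+1)))⁻¹, C,
        ?_, hinv, ?_⟩
      · simpa using (hinv.const_mul (trace C)).const_sub 1
      · filter_upwards [eventually_ge_atTop 0, (hNtop k (by omega)).eventually_gt_atTop 0,
          (hNtop (k+1) (by omega)).eventually_gt_atTop 0] with t ht h0 h1
        have htr : nsq (W t (k+1)) = nsq (W t k) + trace C := by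
          rw [nsq_eq_trace, hC t ht, trace_add, ← nsq_eq_trace']
        have e : (1 - trace C * (nsq (W t (k+1)))⁻¹) * (nsq (W t k))⁻¹
            = (nsq (W t (k+1)))⁻¹ := by
          field_simp
          linarith
        simp only [hA, unitLayers, transpose_smul, Matrix.smul_mul, Matrix.mul_smul, smul_smul,
          ← sq, inv_frobNorm_sq, e]
        rw [hC t ht, smul_add]
  -- the part of the bottom layer orthogonal to `ubar` is negligible
  have hperp : Tendsto (fun t => (nsq (W t 0) - (W t 0).mulVec ubar ⬝ᵥ (W t 0).mulVec ubar)
      / nsq (W t 0)) atTop (nhds 0) := by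
    obtain ⟨T, hT⟩ := eventually_atTop.1 ((hmarg 0).and (eventually_ge_atTop (0 : ℝ)))
    refine tendsto_div_zero_of_barrier (T := T)
      (P' := fun t => -2 * (gradRiskV ℓ' z (w t) ⬝ᵥ projPerp ubar (w t)))
      (fun t ht => ?_) (fun t ht => hflow.hasDerivAt_nsq (hT t ht).2 0 hL0)
      (fun t => ?_) (fun t ht => ?_) hN0top fun ε hε => ?_
    · refine ((hflow.hasDerivAt_nsq (hT t ht).2 0 hL0).fun_sub
        (hflow.hasDerivAt_mulVec (hT t ht).2 hL0 ubar)).congr_deriv ?_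
      rw [projPerp, dotProduct_sub, dotProduct_smul, smul_eq_mul]
      ring
    · have := mulVec_dot_self_le (W t 0) ubar
      rw [hu, mul_one] at this
      linarith
    · have : gradRiskV ℓ' z (w t) ⬝ᵥ w t ≤ 0 := by
        rw [gradRiskV, smul_dotProduct, sum_dotProduct, smul_eq_mul]
        refine mul_nonpos_of_nonneg_of_nonpos (by positivity) (Finset.sum_nonpos fun i _ => ?_)
        rw [smul_dotProduct, smul_eq_mul, dotProduct_comm (z i)]
        exact mul_nonpos_of_nonpos_of_nonneg (hℓ.neg _).le ((hT t ht).1 i).le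
      linarith
    · filter_upwards [hmarg 0, hN0top.eventually_gt_atTop 0, hPrtop.eventually_gt_atTop 0,
        halign.eventually (lt_mem_nhds (show 1 - ε / 2 < 1 by linarith)),
        hPrtop.eventually_ge_atTop ((2 * n / alphaConst z ubar γ) ^ 2 / (ε / 2))]
        with t hm hN hP hal hbig hlt
      have hgoal := grad_dot_perp_nonneg hn hℓ hγ hu hubar_margin halpha (w := w t)
        (fun i => (hm i).le) ?_
      · linarith
      rw [div_le_iff₀ (half_pos hε)] at hbig
      refine hbig.trans ?_
      have h1 := wprod_dot_sq_le hL0 hdimL (A t) (hA1 t) ubar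
      rw [hA, unitLayers_mulVec_dot_self] at h1
      have h2 : ε / 2 ≤ v t ⬝ᵥ v t - (v t ⬝ᵥ ubar) ^ 2 := by
        have h3 : ε ≤ 1 - (nsq (W t 0))⁻¹ * ((W t 0).mulVec ubar ⬝ᵥ (W t 0).mulVec ubar) := by
          have h4 : ε ≤ (nsq (W t 0))⁻¹
              * (nsq (W t 0) - (W t 0).mulVec ubar ⬝ᵥ (W t 0).mulVec ubar) := by
            rw [← div_eq_inv_mul, le_div_iff₀ hN]
            exact hlt.le
          rwa [mul_sub, inv_mul_cancel₀ hN.ne'] at h4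
        have h5 : (v t ⬝ᵥ ubar) ^ 2
            ≤ (nsq (W t 0))⁻¹ * ((W t 0).mulVec ubar ⬝ᵥ (W t 0).mulVec ubar) := h1
        linarith
      rw [projPerp_dot_self hu]
      have e : w t ⬝ᵥ w t - (w t ⬝ᵥ ubar) ^ 2
          = Pr t ^ 2 * (v t ⬝ᵥ v t - (v t ⬝ᵥ ubar) ^ 2) := by
        have hPr0 : Pr t ≠ 0 := fun h => by rw [h] at hP; norm_num at hP
        simp only [hvw, smul_dotProduct, dotProduct_smul, smul_eq_mul]
        field_simp
      rw [e]
      exact mul_le_mul_of_nonneg_left h2 hP.le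
  have hvperp : Tendsto (fun t => projPerp ubar (v t) ⬝ᵥ projPerp ubar (v t)) atTop (nhds 0) := by
    refine squeeze_zero' (Eventually.of_forall fun t => dot_self_nonneg _) ?_ hperp
    filter_upwards [hN0top.eventually_gt_atTop 0] with t ht
    refine (wprod_perp_le hL0 hdimL (A t) (hA1 t) hu).trans (le_of_eq ?_)
    rw [hA, nsq_unitLayers, unitLayers_mulVec_dot_self, ← mul_sub, div_eq_inv_mul]
  have hvu : Tendsto (fun t => v t ⬝ᵥ ubar) atTop (nhds 1) := by
    have h1 : Tendsto (fun t => (v t ⬝ᵥ ubar) ^ 2) atTop (nhds 1) := by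
      have := halign.sub hvperp
      rw [sub_zero] at this
      refine this.congr fun t => ?_
      rw [projPerp_dot_self hu]
      ring
    have h2 := (Real.continuous_sqrt.tendsto 1).comp h1
    rw [Real.sqrt_one] at h2
    refine h2.congr' ?_
    filter_upwards [hmarg 0] with t ht
    refine Real.sqrt_sq ?_
    rw [hvw, smul_dotProduct, smul_eq_mul]
    exact mul_nonneg (inv_nonneg.2 (Finset.prod_nonneg fun _ _ => frobNorm_nonneg _))
      (dot_nonneg_of_margin hn hγ hu hubar_margin halpha fun i => (ht i).le)
  have hlim : ∀ i, Tendsto (fun t => (Pr t)⁻¹ * (w t ⬝ᵥ z i)) atTop (nhds (ubar ⬝ᵥ z i)) := by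
    intro i
    have h1 : Tendsto (fun t => projPerp ubar (v t) ⬝ᵥ z i) atTop (nhds 0) := by
      have h2 := (Real.continuous_sqrt.tendsto 0).comp hvperp
      rw [Real.sqrt_zero] at h2
      refine squeeze_zero_norm (fun t => ?_) h2
      refine Real.abs_le_sqrt ((dot_sq_le _ _).trans ?_)
      exact mul_le_of_le_one_right (dot_self_nonneg _) (hzz i)
    have h3 := (hvu.mul_const (ubar ⬝ᵥ z i)).add h1
    rw [one_mul, add_zero] at h3
    refine h3.congr fun t => ?_
    rw [← dot_decomp, hvw, smul_dotProduct, smul_eq_mul]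
  have hinf : Finset.univ.inf' ⟨⟨0, hn⟩, Finset.mem_univ _⟩ (fun i : Fin n => ubar ⬝ᵥ z i) = γ := by
    refine le_antisymm ?_ (Finset.le_inf' _ _ fun i _ => hubar_margin i)
    obtain ⟨i, hi⟩ := hubar_max ubar hubar_unit
    exact (Finset.inf'_le _ (Finset.mem_univ i)).trans hi
  rw [← hinf]
  exact Tendsto.finset_inf'_nhds_apply _ fun i _ => hlim i

end
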